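/- Under condition (19) (with the same density h_t in both bounds and γ_a = c_a/C_a) and condition (20), the asymptotic variance of the particle filter with i.i.d. resampling satisfies, for every bounded measurable ψ and every t, V_t(ψ) ≤ γ_a^{-3} ( sup_x ψ(x) − inf_x ψ(x) )², i.e. the asymptotic variances stay bounded uniformly in t. -/

import Mathlib

open MeasureTheory

/-- The Markov operator `A_t*`. -/
noncomputable def markovOp {α : Type*} [MeasurableSpace α] (μ : Measure α)
    (a : α → α → ℝ) (f : α → ℝ) : α → ℝ :=
  fun x => ∫ x', f x' * a x' x ∂μ

/-- The Bayes operator `B(f, b)`. -/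
noncomputable def bayesOp {α : Type*} [MeasurableSpace α] (μ : Measure α)
    (f b : α → ℝ) : α → ℝ :=
  fun x => f x * b x / ∫ x', f x' * b x' ∂μ

/-- The true filter densities `f_{t|t}`. -/
noncomputable def trueFilter {α : Type*} [MeasurableSpace α] (μ : Measure α)
    (a0 : α → ℝ) (a : ℕ → α → α → ℝ) (b : ℕ → α → ℝ) : ℕ → α → ℝ
  | 0 => a0
  | (t + 1) => bayesOp μ (markovOp μ (a (t + 1)) (trueFilter μ a0 a b t)) (b (t + 1))

/-- The operator `L_t ψ(x_{t-1}) = ∫ a_t(x_{t-1}, x_t) b_t(x_t, y_t) ψ(x_t) dμ(x_t)`. -/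
noncomputable def obsOp {α : Type*} [MeasurableSpace α] (μ : Measure α)
    (a : ℕ → α → α → ℝ) (b : ℕ → α → ℝ) (t : ℕ) (ψ : α → ℝ) : α → ℝ :=
  fun x => ∫ x', a t x x' * (b t x' * ψ x') ∂μ

/-!
By Hopf's argument, a positive kernel `a` squeezed as `c h ≤ a ≤ C h` contracts the oscillation of
a quotient `φ / g` by the factor `1 - γ`, where `γ = c / C`, and satisfies the Harnack inequality
`γ L g ≤ m (L g)` for `g ≥ 0`. A centred `φ` with `osc (φ / g) ≤ D` satisfies `|φ| ≤ D g`, hence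
`σ² φ ≤ D² m (g²) ≤ γ⁻¹ D² (m g)²` if also `γ g ≤ m g`. Since `m_t (L_{t+1} g) = p_{t+1} m_{t+1} g`,
the normalisation by `p²` in the recursion exactly compensates the passage from `g` to `L g`, so
that the bound `V φ ≤ K D² (m g)²` propagates as soon as `γ⁻¹ + (1 - γ)² K ≤ K`; this holds for
`K = γ⁻²`. The case `g = 1` bounds the variance.
-/

/-- Probability densities with respect to `μ`; the sign condition is imposed everywhere, not just
almost everywhere. -/
structure IsProbDensity {α : Type*} [MeasurableSpace α] (μ : Measure α) (f : α → ℝ) : Prop where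
  nonneg : ∀ x, 0 ≤ f x
  integrable : Integrable f μ
  integral_eq_one : ∫ x, f x ∂μ = 1

/-- Condition (19) at a single time: the kernel `a` is comparable, uniformly in its first variable,
with a function `h` of its second variable. Neither `a` nor `h` need be normalised. -/
structure IsMixingKernel {α β : Type*} [MeasurableSpace α] [MeasurableSpace β]
    (a : α → β → ℝ) (h : β → ℝ) (c C : ℝ) : Prop where
  measurable : Measurable (Function.uncurry a)
  ref_nonneg : ∀ y, 0 ≤ h y
  pos : 0 < c
  const_le : c ≤ C
  lower : ∀ x y, c * h y ≤ a x y
  upper : ∀ x y, a x y ≤ C * h y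

/-- Condition (20) at a single time, for the likelihood `b` and the reference function `h` of
condition (19). -/
structure IsAdmissibleLikelihood {α : Type*} [MeasurableSpace α] (μ : Measure α)
    (h b : α → ℝ) : Prop where
  aestronglyMeasurable : AEStronglyMeasurable b μ
  nonneg : ∀ x, 0 ≤ b x
  integrable : Integrable (fun x => h x * b x) μ
  integral_pos : 0 < ∫ x, h x * b x ∂μ

/-- Hopf's oscillation bound `osc (φ / g) ≤ D` for `g ≥ 0`, written without a division so that `g`
may have zeros. -/
def HopfOscLE {α : Type*} (φ g : α → ℝ) (D : ℝ) : Prop :=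
  ∃ A : ℝ, ∀ x, A * g x ≤ φ x ∧ φ x ≤ (A + D) * g x

/-- Functions that may serve as the denominator `g` in `HopfOscLE φ g D` for the filter density
`f`: they are non-negative and satisfy the Harnack inequality `c g ≤ C ∫ g f`. -/
structure IsHarnackGauge {α : Type*} [MeasurableSpace α] (μ : Measure α) (f : α → ℝ) (c C : ℝ)
    (g : α → ℝ) : Prop where
  aestronglyMeasurable : AEStronglyMeasurable g μ
  nonneg : ∀ x, 0 ≤ g x
  harnack : ∀ x, c * g x ≤ C * ∫ x', g x' * f x' ∂μ
  integral_pos : 0 < ∫ x, g x * f x ∂μ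

namespace HopfOscLE

variable {α : Type*} {φ g k w : α → ℝ} {D : ℝ}

theorem of_bddAbove_of_bddBelow (hφ_above : BddAbove (Set.range φ))
    (hφ_below : BddBelow (Set.range φ)) :
    HopfOscLE φ (fun _ => 1) ((⨆ x, φ x) - ⨅ x, φ x) :=
  ⟨⨅ x, φ x, fun x => ⟨by simpa only [mul_one] using ciInf_le hφ_below x,
    by simpa only [mul_one, add_sub_cancel] using le_ciSup hφ_above x⟩⟩

theorem sub_const_mul (hφ : HopfOscLE φ g D) (r : ℝ) :
    HopfOscLE (fun x => φ x - r * g x) g D := by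
  obtain ⟨A, hA⟩ := hφ
  exact ⟨A - r, fun x => ⟨by linarith [(hA x).1], by linarith [(hA x).2]⟩⟩

theorem mul_left (hφ : HopfOscLE φ g D) (hw : ∀ x, 0 ≤ w x) :
    HopfOscLE (fun x => w x * φ x) (fun x => w x * g x) D := by
  obtain ⟨A, hA⟩ := hφ
  refine ⟨A, fun x => ⟨?_, ?_⟩⟩
  · simpa only [mul_left_comm] using mul_le_mul_of_nonneg_left (hA x).1 (hw x)
  · simpa only [mul_left_comm] using mul_le_mul_of_nonneg_left (hA x).2 (hw x)

/-- The algebraic core of Hopf's argument. In the application `φ` and `g` are images under the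
kernel, while `I` and `J` are the integrals of the preimages of `g` and `φ` against the reference
measure. -/
theorem of_gap_le {c C A I J : ℝ} (hc : 0 ≤ c) (hC : 0 < C) (hg : ∀ x, 0 ≤ g x)
    (hgI : ∀ x, g x ≤ C * I) (hAJ : A * I ≤ J) (hJA : J ≤ (A + D) * I)
    (lower : ∀ x, c * (J - A * I) ≤ φ x - A * g x)
    (upper : ∀ x, c * ((A + D) * I - J) ≤ (A + D) * g x - φ x) :
    HopfOscLE φ g ((1 - c / C) * D) := by
  rcases le_or_gt I 0 with hI | hI
  · refine ⟨0, fun x => ?_⟩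
    have hgx : g x = 0 :=
      le_antisymm ((hgI x).trans (mul_nonpos_of_nonneg_of_nonpos hC.le hI)) (hg x)
    have hI0 : I = 0 := hI.antisymm (nonneg_of_mul_nonneg_right ((hg x).trans (hgI x)) hC)
    have hJ0 : J = 0 := by subst hI0; linarith
    have hlower := lower x
    have hupper := upper x
    simp only [hgx, hI0, hJ0, mul_zero, sub_zero, zero_sub] at hlower hupper ⊢
    exact ⟨hlower, neg_nonneg.mp hupper⟩
  · obtain ⟨s, rfl⟩ : ∃ s, J = (A + s) * I := ⟨J / I - A, by field_simp; ring⟩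
    have hs : 0 ≤ s := by nlinarith
    have hsD : 0 ≤ D - s := by nlinarith
    have hgγ (x : α) : c / C * g x ≤ c * I :=
      calc c / C * g x ≤ c / C * (C * I) := by gcongr; exact hgI x
        _ = c * I := by field_simp
    refine ⟨A + c / C * s, fun x => ⟨?_, ?_⟩⟩
    · linarith [lower x, mul_le_mul_of_nonneg_left (hgγ x) hs]
    · linarith [upper x, mul_le_mul_of_nonneg_left (hgγ x) hsD]

theorem exists_abs_le_mul (hφ : HopfOscLE φ g D) (hg : ∀ x, 0 ≤ g x) :
    ∃ M, ∀ x, |φ x| ≤ M * g x := by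
  obtain ⟨A, hA⟩ := hφ
  refine ⟨max |A| |A + D|, fun x => (abs_le_max_abs_abs (hA x).1 (hA x).2).trans_eq ?_⟩
  rw [abs_mul, abs_mul, abs_of_nonneg (hg x), max_mul_of_nonneg _ _ (hg x)]

variable [MeasurableSpace α] {μ : Measure α}

theorem integrable_mul (hφ : HopfOscLE φ g D) (hg : ∀ x, 0 ≤ g x) (hφm : AEStronglyMeasurable φ μ)
    (hkm : AEStronglyMeasurable k μ) (hkg : Integrable (fun x => k x * g x) μ) :
    Integrable (fun x => k x * φ x) μ := by
  obtain ⟨M, hM⟩ := hφ.exists_abs_le_mul hg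
  refine (hkg.norm.const_mul M).mono' (hkm.mul hφm) (.of_forall fun x => ?_)
  calc ‖k x * φ x‖ = |k x| * |φ x| := norm_mul _ _
    _ ≤ |k x| * (M * g x) := by gcongr; exact hM x
    _ = M * ‖k x * g x‖ := by rw [norm_mul, Real.norm_of_nonneg (hg x), Real.norm_eq_abs]; ring

theorem integrable_likelihood_mul {h b : α → ℝ} (hφ : HopfOscLE φ g D) (hg : ∀ x, 0 ≤ g x)
    (hφm : AEStronglyMeasurable φ μ) (hb : IsAdmissibleLikelihood μ h b)
    (hbg : Integrable (fun x => h x * (b x * g x)) μ) :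
    Integrable (fun x => h x * (b x * φ x)) μ := by
  simpa only [mul_assoc] using hφ.integrable_mul hg hφm hb.integrable.aestronglyMeasurable
    (by simpa only [mul_assoc] using hbg)

theorem abs_le_mul_of_integral_eq_zero (hφ : HopfOscLE φ g D) (hg : ∀ x, 0 ≤ g x)
    (hk : ∀ x, 0 ≤ k x) (hφk : Integrable (fun x => φ x * k x) μ)
    (hgk : Integrable (fun x => g x * k x) μ) (hzero : ∫ x, φ x * k x ∂μ = 0)
    (hpos : 0 < ∫ x, g x * k x ∂μ) (x : α) : |φ x| ≤ D * g x := by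
  obtain ⟨A, hA⟩ := hφ
  have hA_nonpos : A * ∫ x, g x * k x ∂μ ≤ 0 := by
    rw [← hzero, ← integral_const_mul]
    refine integral_mono (hgk.const_mul A) hφk fun x => ?_
    simpa only [mul_assoc] using mul_le_mul_of_nonneg_right (hA x).1 (hk x)
  have hAD_nonneg : 0 ≤ (A + D) * ∫ x, g x * k x ∂μ := by
    rw [← hzero, ← integral_const_mul]
    refine integral_mono hφk (hgk.const_mul (A + D)) fun x => ?_
    simpa only [mul_assoc] using mul_le_mul_of_nonneg_right (hA x).2 (hk x)
  have hA0 : A ≤ 0 := nonpos_of_mul_nonpos_left hA_nonpos hpos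
  have hAD0 : 0 ≤ A + D := nonneg_of_mul_nonneg_left hAD_nonneg hpos
  refine abs_le.mpr ⟨?_, (hA x).2.trans ?_⟩
  · calc -(D * g x) = -D * g x := (neg_mul _ _).symm
      _ ≤ A * g x := mul_le_mul_of_nonneg_right (by linarith) (hg x)
      _ ≤ φ x := (hA x).1
  · exact mul_le_mul_of_nonneg_right (by linarith) (hg x)

theorem integral_sq_mul_le (hφ : HopfOscLE φ g D) (hg : ∀ x, 0 ≤ g x) (hk : ∀ x, 0 ≤ k x)
    {G : ℝ} (hgG : ∀ x, g x ≤ G) (hφk : Integrable (fun x => φ x * k x) μ)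
    (hgk : Integrable (fun x => g x * k x) μ) (hzero : ∫ x, φ x * k x ∂μ = 0)
    (hpos : 0 < ∫ x, g x * k x ∂μ) :
    ∫ x, φ x ^ 2 * k x ∂μ ≤ D ^ 2 * G * ∫ x, g x * k x ∂μ := by
  rw [← integral_const_mul]
  refine integral_mono_of_nonneg (.of_forall fun x => mul_nonneg (sq_nonneg _) (hk x))
    (hgk.const_mul _) (.of_forall fun x => ?_)
  have habs : |φ x| ≤ D * g x := hφ.abs_le_mul_of_integral_eq_zero hg hk hφk hgk hzero hpos x
  calc φ x ^ 2 * k x = |φ x| ^ 2 * k x := by rw [sq_abs]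
    _ ≤ (D * g x) ^ 2 * k x := by have := hk x; gcongr
    _ = D ^ 2 * g x * (g x * k x) := by ring
    _ ≤ D ^ 2 * G * (g x * k x) := by have := hk x; have := hg x; gcongr; exact hgG x

end HopfOscLE

namespace IsProbDensity

variable {α : Type*} [MeasurableSpace α] {μ : Measure α} {f u : α → ℝ}

theorem le_integral_mul (hf : IsProbDensity μ f) {r : ℝ} (hu : ∀ x, r ≤ u x)
    (huf : Integrable (fun x => u x * f x) μ) : r ≤ ∫ x, u x * f x ∂μ :=
  calc r = ∫ x, r * f x ∂μ := by rw [integral_const_mul, hf.integral_eq_one, mul_one]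
    _ ≤ ∫ x, u x * f x ∂μ := integral_mono (hf.integrable.const_mul r) huf fun x =>
        mul_le_mul_of_nonneg_right (hu x) (hf.nonneg x)

theorem integral_sub_mul_eq_zero (hf : IsProbDensity μ f)
    (huf : Integrable (fun x => u x * f x) μ) :
    ∫ x, (u x - ∫ x', u x' * f x' ∂μ) * f x ∂μ = 0 := by
  simp only [sub_mul]
  rw [integral_sub huf (hf.integrable.const_mul _), integral_const_mul, hf.integral_eq_one,
    mul_one, sub_self]

end IsProbDensity

namespace IsHarnackGauge

variable {α : Type*} [MeasurableSpace α] {μ : Measure α} {f g k h b : α → ℝ} {c C : ℝ}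

theorem one (hf : IsProbDensity μ f) (hcC : c ≤ C) : IsHarnackGauge μ f c C fun _ => 1 where
  aestronglyMeasurable := aestronglyMeasurable_const
  nonneg _ := zero_le_one
  harnack _ := by simpa only [one_mul, hf.integral_eq_one, mul_one] using hcC
  integral_pos := by simp only [one_mul, hf.integral_eq_one, zero_lt_one]

theorem le_inv_mul_integral (hg : IsHarnackGauge μ f c C g) (hc : 0 < c) (x : α) :
    g x ≤ (c / C)⁻¹ * ∫ x', g x' * f x' ∂μ := by
  rw [inv_div, div_mul_eq_mul_div, le_div_iff₀' hc]
  exact hg.harnack x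

theorem integrable_mul (hg : IsHarnackGauge μ f c C g) (hc : 0 < c) (hk : Integrable k μ) :
    Integrable (fun x => k x * g x) μ :=
  hk.mul_bdd hg.aestronglyMeasurable (.of_forall fun x => by
    simpa only [Real.norm_of_nonneg (hg.nonneg x)] using hg.le_inv_mul_integral hc x)

theorem integrable_likelihood_mul (hg : IsHarnackGauge μ f c C g) (hc : 0 < c)
    (hb : IsAdmissibleLikelihood μ h b) : Integrable (fun x => h x * (b x * g x)) μ := by
  simpa only [mul_assoc] using hg.integrable_mul hc hb.integrable

end IsHarnackGauge

theorem integral_mul_kernel_mul_const {α : Type*} [MeasurableSpace α] (μ : Measure α)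
    (a : α → α → ℝ) (f : α → ℝ) (y : α) (r : ℝ) :
    ∫ x, f x * (a x y * r) ∂μ = r * markovOp μ a f y := by
  simp only [markovOp, ← mul_assoc, integral_mul_const, mul_comm r]

namespace IsMixingKernel

section Kernel

variable {α β : Type*} [MeasurableSpace α] [MeasurableSpace β] {μ : Measure α} {ν : Measure β}
  {a : α → β → ℝ} {h : β → ℝ} {c C : ℝ} {f : α → ℝ} {φ g φ₁ φ₂ : β → ℝ}

theorem nonneg (ha : IsMixingKernel a h c C) (x : α) (y : β) : 0 ≤ a x y :=
  (mul_nonneg ha.pos.le (ha.ref_nonneg y)).trans (ha.lower x y)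

theorem ratio_pos (ha : IsMixingKernel a h c C) : 0 < c / C :=
  div_pos ha.pos (ha.pos.trans_le ha.const_le)

theorem ratio_le_one (ha : IsMixingKernel a h c C) : c / C ≤ 1 :=
  div_le_one_of_le₀ ha.const_le (ha.pos.le.trans ha.const_le)

theorem integrable_mul (ha : IsMixingKernel a h c C) (hφm : AEStronglyMeasurable φ ν)
    (hφ : Integrable (fun y => h y * φ y) ν) (x : α) : Integrable (fun y => a x y * φ y) ν := by
  have ham : Measurable (a x) := ha.measurable.comp measurable_prodMk_left
  refine (hφ.norm.const_mul C).mono' (ham.aestronglyMeasurable.mul hφm) (.of_forall fun y => ?_)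
  calc ‖a x y * φ y‖ = a x y * ‖φ y‖ := by rw [norm_mul, Real.norm_of_nonneg (ha.nonneg x y)]
    _ ≤ C * h y * ‖φ y‖ := by gcongr; exact ha.upper x y
    _ = C * ‖h y * φ y‖ := by rw [norm_mul, Real.norm_of_nonneg (ha.ref_nonneg y), mul_assoc]

theorem integrable_prod_mul [SFinite ν] (ha : IsMixingKernel a h c C) (hf : Integrable f μ)
    (hφm : AEStronglyMeasurable φ ν) (hφ : Integrable (fun y => h y * φ y) ν) :
    Integrable (fun z : α × β => f z.1 * (a z.1 z.2 * φ z.2)) (μ.prod ν) := by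
  refine ((hf.mul_prod hφ).norm.const_mul C).mono' (hf.aestronglyMeasurable.comp_fst.mul
    (ha.measurable.aestronglyMeasurable.mul hφm.comp_snd)) (.of_forall fun ⟨x, y⟩ => ?_)
  calc ‖f x * (a x y * φ y)‖ = ‖f x‖ * (a x y * ‖φ y‖) := by
        rw [norm_mul, norm_mul, Real.norm_of_nonneg (ha.nonneg x y)]
    _ ≤ ‖f x‖ * (C * h y * ‖φ y‖) := by gcongr; exact ha.upper x y
    _ = C * ‖f x * (h y * φ y)‖ := by
        rw [norm_mul, norm_mul, Real.norm_of_nonneg (ha.ref_nonneg y)]; ring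

theorem aestronglyMeasurable_integral [SFinite ν] (ha : IsMixingKernel a h c C)
    (hφm : AEStronglyMeasurable φ ν) :
    AEStronglyMeasurable (fun x => ∫ y, a x y * φ y ∂ν) μ :=
  (ha.measurable.aestronglyMeasurable.mul hφm.comp_snd).integral_prod_right'

theorem integral_le_mul_integral (ha : IsMixingKernel a h c C) (hφm : AEStronglyMeasurable φ ν)
    (hφ : Integrable (fun y => h y * φ y) ν) (hφ0 : ∀ y, 0 ≤ φ y) (x : α) :
    ∫ y, a x y * φ y ∂ν ≤ C * ∫ y, h y * φ y ∂ν := by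
  rw [← integral_const_mul]
  refine integral_mono (ha.integrable_mul hφm hφ x) (hφ.const_mul C) fun y => ?_
  simpa only [mul_assoc] using mul_le_mul_of_nonneg_right (ha.upper x y) (hφ0 y)

theorem mul_integral_le_integral (ha : IsMixingKernel a h c C) (hφm : AEStronglyMeasurable φ ν)
    (hφ : Integrable (fun y => h y * φ y) ν) (hφ0 : ∀ y, 0 ≤ φ y) (x : α) :
    c * ∫ y, h y * φ y ∂ν ≤ ∫ y, a x y * φ y ∂ν := by
  rw [← integral_const_mul]
  refine integral_mono (hφ.const_mul c) (ha.integrable_mul hφm hφ x) fun y => ?_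
  simpa only [mul_assoc] using mul_le_mul_of_nonneg_right (ha.lower x y) (hφ0 y)

theorem mul_integral_sub_le_integral_sub (ha : IsMixingKernel a h c C)
    (hφm₁ : AEStronglyMeasurable φ₁ ν) (hφm₂ : AEStronglyMeasurable φ₂ ν)
    (hφ₁ : Integrable (fun y => h y * φ₁ y) ν) (hφ₂ : Integrable (fun y => h y * φ₂ y) ν)
    (hle : ∀ y, φ₁ y ≤ φ₂ y) (x : α) :
    c * (∫ y, h y * φ₂ y ∂ν - ∫ y, h y * φ₁ y ∂ν)
      ≤ ∫ y, a x y * φ₂ y ∂ν - ∫ y, a x y * φ₁ y ∂ν := by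
  rw [← integral_sub hφ₂ hφ₁,
    ← integral_sub (ha.integrable_mul hφm₂ hφ₂ x) (ha.integrable_mul hφm₁ hφ₁ x)]
  have hsub : Integrable (fun y => h y * (φ₂ y - φ₁ y)) ν := by
    simpa only [mul_sub] using! hφ₂.sub hφ₁
  simpa only [Pi.sub_apply, mul_sub] using
    ha.mul_integral_le_integral (hφm₂.sub hφm₁) hsub (fun y => sub_nonneg.mpr (hle y)) x

theorem harnack (ha : IsMixingKernel a h c C) (hφm : AEStronglyMeasurable φ ν)
    (hφ : Integrable (fun y => h y * φ y) ν) (hφ0 : ∀ y, 0 ≤ φ y) (x x' : α) :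
    c * ∫ y, a x y * φ y ∂ν ≤ C * ∫ y, a x' y * φ y ∂ν :=
  have hc : 0 ≤ c := ha.pos.le
  have hC : 0 ≤ C := hc.trans ha.const_le
  calc c * ∫ y, a x y * φ y ∂ν ≤ c * (C * ∫ y, h y * φ y ∂ν) := by
        gcongr; exact ha.integral_le_mul_integral hφm hφ hφ0 x
    _ = C * (c * ∫ y, h y * φ y ∂ν) := mul_left_comm _ _ _
    _ ≤ C * ∫ y, a x' y * φ y ∂ν := by
        gcongr; exact ha.mul_integral_le_integral hφm hφ hφ0 x'

theorem hopfOscLE_integral (ha : IsMixingKernel a h c C) {D : ℝ} (hφg : HopfOscLE φ g D)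
    (hφm : AEStronglyMeasurable φ ν) (hgm : AEStronglyMeasurable g ν)
    (hφ : Integrable (fun y => h y * φ y) ν) (hg : Integrable (fun y => h y * g y) ν)
    (hg0 : ∀ y, 0 ≤ g y) :
    HopfOscLE (fun x => ∫ y, a x y * φ y ∂ν) (fun x => ∫ y, a x y * g y ∂ν)
      ((1 - c / C) * D) := by
  obtain ⟨A, hA⟩ := hφg
  have hC : 0 < C := ha.pos.trans_le ha.const_le
  set I : ℝ := ∫ y, h y * g y ∂ν
  set J : ℝ := ∫ y, h y * φ y ∂ν
  have hmul (B : ℝ) : Integrable (fun y => h y * (B * g y)) ν := by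
    simpa only [mul_left_comm] using hg.const_mul B
  have lower_gap (x : α) : c * (J - A * I) ≤ ∫ y, a x y * φ y ∂ν - A * ∫ y, a x y * g y ∂ν := by
    simpa only [mul_left_comm _ A, integral_const_mul] using
      ha.mul_integral_sub_le_integral_sub (hgm.const_mul A) hφm (hmul A) hφ (fun y => (hA y).1) x
  have upper_gap (x : α) :
      c * ((A + D) * I - J) ≤ (A + D) * ∫ y, a x y * g y ∂ν - ∫ y, a x y * φ y ∂ν := by
    simpa only [mul_left_comm _ (A + D), integral_const_mul] using
      ha.mul_integral_sub_le_integral_sub hφm (hgm.const_mul (A + D)) hφ (hmul (A + D))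
        (fun y => (hA y).2) x
  have hAJ : A * I ≤ J := by
    simpa only [mul_left_comm _ A, integral_const_mul] using
      integral_mono (hmul A) hφ fun y => mul_le_mul_of_nonneg_left (hA y).1 (ha.ref_nonneg y)
  have hJAD : J ≤ (A + D) * I := by
    simpa only [mul_left_comm _ (A + D), integral_const_mul] using
      integral_mono hφ (hmul (A + D)) fun y => mul_le_mul_of_nonneg_left (hA y).2 (ha.ref_nonneg y)
  exact .of_gap_le ha.pos.le hC
    (fun x => integral_nonneg fun y => mul_nonneg (ha.nonneg x y) (hg0 y))
    (ha.integral_le_mul_integral hgm hg hg0) hAJ hJAD lower_gap upper_gap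

end Kernel

section Filter

variable {α : Type*} [MeasurableSpace α] {μ : Measure α} [SFinite μ] {a : α → α → ℝ}
  {h b f φ g : α → ℝ} {c C : ℝ}

theorem integrable_integral_mul (ha : IsMixingKernel a h c C) (hf : Integrable f μ)
    (hφm : AEStronglyMeasurable φ μ) (hφ : Integrable (fun y => h y * φ y) μ) :
    Integrable (fun x => (∫ y, a x y * φ y ∂μ) * f x) μ := by
  have hprod := (ha.integrable_prod_mul hf hφm hφ).integral_prod_left
  simp only [integral_const_mul] at hprod
  simpa only [mul_comm] using hprod

theorem integrable_mul_markovOp (ha : IsMixingKernel a h c C) (hf : Integrable f μ)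
    (hφm : AEStronglyMeasurable φ μ) (hφ : Integrable (fun y => h y * φ y) μ) :
    Integrable (fun y => φ y * markovOp μ a f y) μ := by
  simpa only [integral_mul_kernel_mul_const] using
    (ha.integrable_prod_mul hf hφm hφ).integral_prod_right

theorem integral_integral_mul_eq_integral_mul_markovOp (ha : IsMixingKernel a h c C)
    (hf : Integrable f μ) (hφm : AEStronglyMeasurable φ μ)
    (hφ : Integrable (fun y => h y * φ y) μ) :
    ∫ x, (∫ y, a x y * φ y ∂μ) * f x ∂μ = ∫ y, φ y * markovOp μ a f y ∂μ :=
  calc ∫ x, (∫ y, a x y * φ y ∂μ) * f x ∂μ = ∫ x, ∫ y, f x * (a x y * φ y) ∂μ ∂μ := by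
        simp only [mul_comm _ (f _), integral_const_mul]
    _ = ∫ y, ∫ x, f x * (a x y * φ y) ∂μ ∂μ :=
        integral_integral_swap (ha.integrable_prod_mul hf hφm hφ)
    _ = ∫ y, φ y * markovOp μ a f y ∂μ := by simp only [integral_mul_kernel_mul_const]

theorem integral_markovOp_mul_pos (ha : IsMixingKernel a h c C) (hf : IsProbDensity μ f)
    (hb : IsAdmissibleLikelihood μ h b) : 0 < ∫ y, markovOp μ a f y * b y ∂μ :=
  calc 0 < c * ∫ y, h y * b y ∂μ := mul_pos ha.pos hb.integral_pos
    _ ≤ ∫ x, (∫ y, a x y * b y ∂μ) * f x ∂μ :=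
        hf.le_integral_mul
          (ha.mul_integral_le_integral hb.aestronglyMeasurable hb.integrable hb.nonneg)
          (ha.integrable_integral_mul hf.integrable hb.aestronglyMeasurable hb.integrable)
    _ = ∫ y, markovOp μ a f y * b y ∂μ := by
        rw [ha.integral_integral_mul_eq_integral_mul_markovOp hf.integrable
          hb.aestronglyMeasurable hb.integrable]
        simp only [mul_comm]

theorem isProbDensity_bayesOp_markovOp (ha : IsMixingKernel a h c C) (hf : IsProbDensity μ f)
    (hb : IsAdmissibleLikelihood μ h b) : IsProbDensity μ (bayesOp μ (markovOp μ a f) b) where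
  nonneg x := div_nonneg (mul_nonneg
    (integral_nonneg fun x' => mul_nonneg (hf.nonneg x') (ha.nonneg x' x)) (hb.nonneg x))
    (ha.integral_markovOp_mul_pos hf hb).le
  integrable := by
    simpa only [mul_comm (b _)] using! (ha.integrable_mul_markovOp hf.integrable
      hb.aestronglyMeasurable hb.integrable).div_const _
  integral_eq_one := by
    simp only [bayesOp, integral_div, div_self (ha.integral_markovOp_mul_pos hf hb).ne']

theorem integral_integral_likelihood_mul (ha : IsMixingKernel a h c C) (hf : IsProbDensity μ f)
    (hb : IsAdmissibleLikelihood μ h b) (hφm : AEStronglyMeasurable φ μ)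
    (hφ : Integrable (fun y => h y * (b y * φ y)) μ) :
    ∫ x, (∫ y, a x y * (b y * φ y) ∂μ) * f x ∂μ
      = (∫ y, markovOp μ a f y * b y ∂μ) * ∫ y, φ y * bayesOp μ (markovOp μ a f) b y ∂μ := by
  rw [ha.integral_integral_mul_eq_integral_mul_markovOp (φ := fun y => b y * φ y) hf.integrable
    (hb.aestronglyMeasurable.mul hφm) hφ, ← integral_const_mul]
  refine integral_congr_ae (.of_forall fun y => ?_)
  have := (ha.integral_markovOp_mul_pos hf hb).ne'
  simp only [bayesOp]
  field_simp

theorem isHarnackGauge_integral (ha : IsMixingKernel a h c C) (hf : IsProbDensity μ f)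
    (hb : IsAdmissibleLikelihood μ h b)
    (hg : IsHarnackGauge μ (bayesOp μ (markovOp μ a f) b) c C g) :
    IsHarnackGauge μ f c C fun x => ∫ y, a x y * (b y * g y) ∂μ where
  aestronglyMeasurable :=
    ha.aestronglyMeasurable_integral (hb.aestronglyMeasurable.mul hg.aestronglyMeasurable)
  nonneg x := integral_nonneg fun y =>
    mul_nonneg (ha.nonneg x y) (mul_nonneg (hb.nonneg y) (hg.nonneg y))
  harnack x := by
    have hbgm : AEStronglyMeasurable (fun y => b y * g y) μ :=
      hb.aestronglyMeasurable.mul hg.aestronglyMeasurable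
    have hbg : Integrable (fun y => h y * (b y * g y)) μ := hg.integrable_likelihood_mul ha.pos hb
    have hLgf : Integrable (fun x' => C * (∫ y, a x' y * (b y * g y) ∂μ) * f x') μ := by
      simpa only [mul_assoc] using (ha.integrable_integral_mul hf.integrable hbgm hbg).const_mul C
    simpa only [mul_assoc, integral_const_mul] using hf.le_integral_mul
      (ha.harnack hbgm hbg (fun y => mul_nonneg (hb.nonneg y) (hg.nonneg y)) x) hLgf
  integral_pos := by
    rw [ha.integral_integral_likelihood_mul hf hb hg.aestronglyMeasurable
      (hg.integrable_likelihood_mul ha.pos hb)]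
    exact mul_pos (ha.integral_markovOp_mul_pos hf hb) hg.integral_pos

end Filter

end IsMixingKernel

section Model

variable {α : Type*} [MeasurableSpace α]

/-- The filter moment `m_t(ψ)`. -/
noncomputable def filterMean (μ : Measure α) (a0 : α → ℝ) (a : ℕ → α → α → ℝ) (b : ℕ → α → ℝ)
    (t : ℕ) (ψ : α → ℝ) : ℝ :=
  ∫ x, ψ x * trueFilter μ a0 a b t x ∂μ

/-- The filter variance `σ_t²(ψ)`. -/
noncomputable def filterVariance (μ : Measure α) (a0 : α → ℝ) (a : ℕ → α → α → ℝ)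
    (b : ℕ → α → ℝ) (t : ℕ) (ψ : α → ℝ) : ℝ :=
  ∫ x, (ψ x - filterMean μ a0 a b t ψ) ^ 2 * trueFilter μ a0 a b t x ∂μ

/-- The prediction density of the next observation: index `t` stands for
`p(y_{t+1} | y_{1:t}) = m_t(L_{t+1} 1)`. -/
noncomputable def predictionDensity (μ : Measure α) (a0 : α → ℝ) (a : ℕ → α → α → ℝ)
    (b : ℕ → α → ℝ) (t : ℕ) : ℝ :=
  filterMean μ a0 a b t (obsOp μ a b (t + 1) fun _ => 1)

/-- The asymptotic variance `V_t(ψ)` of the particle filter with i.i.d. resampling, as given by its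
recursion. -/
noncomputable def asymptoticVariance (μ : Measure α) (a0 : α → ℝ) (a : ℕ → α → α → ℝ)
    (b : ℕ → α → ℝ) : ℕ → (α → ℝ) → ℝ
  | 0, ψ => filterVariance μ a0 a b 0 ψ
  | t + 1, ψ => filterVariance μ a0 a b (t + 1) ψ
      + asymptoticVariance μ a0 a b t
          (obsOp μ a b (t + 1) fun x => ψ x - filterMean μ a0 a b (t + 1) ψ)
        / predictionDensity μ a0 a b t ^ 2

/-- A state space model whose initial law is a probability density and which satisfies conditions
(19) and (20), with the same constants at every time. The families `a`, `h` and `b` only matter at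
positive times. -/
structure IsMixingModel (μ : Measure α) (a0 : α → ℝ) (a : ℕ → α → α → ℝ) (b h : ℕ → α → ℝ)
    (c C : ℝ) : Prop where
  isProbDensity_init : IsProbDensity μ a0
  isMixingKernel : ∀ t, IsMixingKernel (a (t + 1)) (h (t + 1)) c C
  isAdmissibleLikelihood : ∀ t, IsAdmissibleLikelihood μ (h (t + 1)) (b (t + 1))

variable {μ : Measure α} {a0 : α → ℝ} {a : ℕ → α → α → ℝ} {b h : ℕ → α → ℝ} {c C : ℝ}

theorem eq_asymptoticVariance_of_recursion {m σ2 V : ℕ → (α → ℝ) → ℝ} {p : ℕ → ℝ}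
    (hm : ∀ t ψ, m t ψ = ∫ x, ψ x * trueFilter μ a0 a b t x ∂μ)
    (hσ2 : ∀ t ψ, σ2 t ψ = ∫ x, (ψ x - m t ψ) ^ 2 * trueFilter μ a0 a b t x ∂μ)
    (hp : ∀ t, p (t + 1) = m t (obsOp μ a b (t + 1) fun _ => 1))
    (hV0 : ∀ ψ, V 0 ψ = σ2 0 ψ)
    (hVsucc : ∀ t ψ, V (t + 1) ψ = σ2 (t + 1) ψ
      + V t (obsOp μ a b (t + 1) fun x => ψ x - m (t + 1) ψ) / p (t + 1) ^ 2)
    (t : ℕ) (ψ : α → ℝ) : V t ψ = asymptoticVariance μ a0 a b t ψ := by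
  obtain rfl : m = filterMean μ a0 a b := funext₂ hm
  obtain rfl : σ2 = filterVariance μ a0 a b := funext₂ hσ2
  induction t generalizing ψ with
  | zero => exact hV0 ψ
  | succ t ih => rw [hVsucc, hp, ih]; rfl

theorem asymptoticVariance_sub_filterMean {t : ℕ} {ψ : α → ℝ}
    (hψ : filterMean μ a0 a b t (fun x => ψ x - filterMean μ a0 a b t ψ) = 0) :
    asymptoticVariance μ a0 a b t (fun x => ψ x - filterMean μ a0 a b t ψ)
      = asymptoticVariance μ a0 a b t ψ := by
  cases t <;> simp only [asymptoticVariance, filterVariance, hψ, sub_zero]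

namespace IsMixingModel

variable {φ g : α → ℝ} {D : ℝ} {t : ℕ}

theorem hopfOscLE_obsOp (hM : IsMixingModel μ a0 a b h c C)
    (hg : IsHarnackGauge μ (trueFilter μ a0 a b (t + 1)) c C g) (hφg : HopfOscLE φ g D)
    (hφm : AEStronglyMeasurable φ μ)
    (hφ : Integrable (fun x => h (t + 1) x * (b (t + 1) x * φ x)) μ) :
    HopfOscLE (obsOp μ a b (t + 1) φ) (obsOp μ a b (t + 1) g) ((1 - c / C) * D) :=
  have ha := hM.isMixingKernel t
  have hb := hM.isAdmissibleLikelihood t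
  ha.hopfOscLE_integral (hφg.mul_left hb.nonneg) (hb.aestronglyMeasurable.mul hφm)
    (hb.aestronglyMeasurable.mul hg.aestronglyMeasurable) hφ
    (hg.integrable_likelihood_mul ha.pos hb) fun x => mul_nonneg (hb.nonneg x) (hg.nonneg x)

variable [SFinite μ]

theorem isProbDensity_trueFilter (hM : IsMixingModel μ a0 a b h c C) :
    ∀ t, IsProbDensity μ (trueFilter μ a0 a b t)
  | 0 => hM.isProbDensity_init
  | t + 1 => (hM.isMixingKernel t).isProbDensity_bayesOp_markovOp
      (hM.isProbDensity_trueFilter t) (hM.isAdmissibleLikelihood t)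

theorem filterMean_one (hM : IsMixingModel μ a0 a b h c C) (t : ℕ) :
    filterMean μ a0 a b t (fun _ => 1) = 1 := by
  simpa only [filterMean, one_mul] using (hM.isProbDensity_trueFilter t).integral_eq_one

theorem predictionDensity_eq_integral (hM : IsMixingModel μ a0 a b h c C) (t : ℕ) :
    predictionDensity μ a0 a b t
      = ∫ x, markovOp μ (a (t + 1)) (trueFilter μ a0 a b t) x * b (t + 1) x ∂μ := by
  have hb := hM.isAdmissibleLikelihood t
  have hduality := (hM.isMixingKernel t).integral_integral_likelihood_mul
    (hM.isProbDensity_trueFilter t) hb (aestronglyMeasurable_const (b := (1 : ℝ)))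
    (by simpa only [mul_one] using hb.integrable)
  exact hduality.trans (mul_right_eq_self₀.mpr (.inl (hM.filterMean_one (t + 1))))

theorem predictionDensity_pos (hM : IsMixingModel μ a0 a b h c C) (t : ℕ) :
    0 < predictionDensity μ a0 a b t := by
  rw [hM.predictionDensity_eq_integral t]
  exact (hM.isMixingKernel t).integral_markovOp_mul_pos (hM.isProbDensity_trueFilter t)
    (hM.isAdmissibleLikelihood t)

theorem filterMean_obsOp (hM : IsMixingModel μ a0 a b h c C) (hφm : AEStronglyMeasurable φ μ)
    (hφ : Integrable (fun x => h (t + 1) x * (b (t + 1) x * φ x)) μ) :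
    filterMean μ a0 a b t (obsOp μ a b (t + 1) φ)
      = predictionDensity μ a0 a b t * filterMean μ a0 a b (t + 1) φ := by
  rw [hM.predictionDensity_eq_integral t]
  exact (hM.isMixingKernel t).integral_integral_likelihood_mul (hM.isProbDensity_trueFilter t)
    (hM.isAdmissibleLikelihood t) hφm hφ

theorem filterVariance_le_of_hopfOscLE (hM : IsMixingModel μ a0 a b h c C)
    (hg : IsHarnackGauge μ (trueFilter μ a0 a b t) c C g) (hφg : HopfOscLE φ g D)
    (hφm : AEStronglyMeasurable φ μ) (hφ : filterMean μ a0 a b t φ = 0) :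
    filterVariance μ a0 a b t φ ≤ (c / C)⁻¹ * (D * filterMean μ a0 a b t g) ^ 2 := by
  have hf := hM.isProbDensity_trueFilter t
  have hgf := hg.integrable_mul (hM.isMixingKernel t).pos hf.integrable
  have hφf := hφg.integrable_mul hg.nonneg hφm hf.integrable.aestronglyMeasurable hgf
  simp only [filterVariance, hφ, sub_zero]
  refine (hφg.integral_sq_mul_le hg.nonneg hf.nonneg (hg.le_inv_mul_integral
    (hM.isMixingKernel t).pos) (by simpa only [mul_comm] using hφf)
    (by simpa only [mul_comm] using hgf) hφ hg.integral_pos).trans_eq ?_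
  rw [filterMean]; ring

theorem isHarnackGauge_obsOp (hM : IsMixingModel μ a0 a b h c C)
    (hg : IsHarnackGauge μ (trueFilter μ a0 a b (t + 1)) c C g) :
    IsHarnackGauge μ (trueFilter μ a0 a b t) c C (obsOp μ a b (t + 1) g) :=
  (hM.isMixingKernel t).isHarnackGauge_integral (hM.isProbDensity_trueFilter t)
    (hM.isAdmissibleLikelihood t) hg

theorem asymptoticVariance_le_of_hopfOscLE (hM : IsMixingModel μ a0 a b h c C)
    (hg : IsHarnackGauge μ (trueFilter μ a0 a b t) c C g) (hφg : HopfOscLE φ g D)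
    (hφm : AEStronglyMeasurable φ μ) (hφ : filterMean μ a0 a b t φ = 0) :
    asymptoticVariance μ a0 a b t φ ≤ (c / C)⁻¹ ^ 2 * (D * filterMean μ a0 a b t g) ^ 2 := by
  have hγ_pos : 0 < c / C := (hM.isMixingKernel 0).ratio_pos
  have hγ_le : c / C ≤ 1 := (hM.isMixingKernel 0).ratio_le_one
  induction t generalizing φ g D with
  | zero =>
    refine (hM.filterVariance_le_of_hopfOscLE hg hφg hφm hφ).trans ?_
    gcongr
    exact le_self_pow₀ ((one_le_inv₀ hγ_pos).mpr hγ_le) two_ne_zero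
  | succ t ih =>
    have ha := hM.isMixingKernel t
    have hb := hM.isAdmissibleLikelihood t
    have hp := hM.predictionDensity_pos t
    have hbg := hg.integrable_likelihood_mul ha.pos hb
    have hbφ := hφg.integrable_likelihood_mul hg.nonneg hφm hb hbg
    have hLφ : filterMean μ a0 a b t (obsOp μ a b (t + 1) φ) = 0 := by
      rw [hM.filterMean_obsOp hφm hbφ, hφ, mul_zero]
    have hV := ih (hM.isHarnackGauge_obsOp hg) (hM.hopfOscLE_obsOp hg hφg hφm hbφ)
      (ha.aestronglyMeasurable_integral (hb.aestronglyMeasurable.mul hφm)) hLφ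
    rw [hM.filterMean_obsOp hg.aestronglyMeasurable hbg] at hV
    simp only [asymptoticVariance, hφ, sub_zero]
    set γ := c / C
    set P := predictionDensity μ a0 a b t
    set G := filterMean μ a0 a b (t + 1) g
    calc _ ≤ γ⁻¹ * (D * G) ^ 2 + γ⁻¹ ^ 2 * ((1 - γ) * D * (P * G)) ^ 2 / P ^ 2 := by
          gcongr; exact hM.filterVariance_le_of_hopfOscLE hg hφg hφm hφ
      _ = γ⁻¹ ^ 2 * (γ + (1 - γ) ^ 2) * (D * G) ^ 2 := by field_simp
      _ ≤ γ⁻¹ ^ 2 * 1 * (D * G) ^ 2 := by gcongr; nlinarith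
      _ = γ⁻¹ ^ 2 * (D * G) ^ 2 := by rw [mul_one]

end IsMixingModel

theorem asymptotic_variance_uniformly_bounded_general [SFinite μ]
    (hM : IsMixingModel μ a0 a b h c C) {ψ : α → ℝ} (hψ : AEStronglyMeasurable ψ μ)
    (hψ_above : BddAbove (Set.range ψ)) (hψ_below : BddBelow (Set.range ψ)) (t : ℕ) :
    asymptoticVariance μ a0 a b t ψ ≤ (c / C)⁻¹ ^ 2 * ((⨆ x, ψ x) - ⨅ x, ψ x) ^ 2 := by
  have hf := hM.isProbDensity_trueFilter t
  have hosc := HopfOscLE.of_bddAbove_of_bddBelow hψ_above hψ_below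
  have hψf : Integrable (fun x => ψ x * trueFilter μ a0 a b t x) μ := by
    simpa only [mul_comm] using hosc.integrable_mul (fun _ => zero_le_one) hψ
      hf.integrable.aestronglyMeasurable (by simpa only [mul_one] using hf.integrable)
  have hcentred : filterMean μ a0 a b t (fun x => ψ x - filterMean μ a0 a b t ψ) = 0 :=
    hf.integral_sub_mul_eq_zero hψf
  have hcentred_osc : HopfOscLE (fun x => ψ x - filterMean μ a0 a b t ψ) (fun _ => 1)
      ((⨆ x, ψ x) - ⨅ x, ψ x) := by
    simpa only [mul_one] using hosc.sub_const_mul (filterMean μ a0 a b t ψ)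
  rw [← asymptoticVariance_sub_filterMean hcentred]
  simpa only [hM.filterMean_one, mul_one] using hM.asymptoticVariance_le_of_hopfOscLE
    (.one hf (hM.isMixingKernel t).const_le) hcentred_osc
    (hψ.sub aestronglyMeasurable_const) hcentred

end Model

/-- Bound (30): under conditions (19) (`c_a h_t ≤ a_t(x',·) ≤ C_a h_t`) and (20)
(`0 < ∫ b_t h_t dμ < ∞`), the asymptotic variance of the particle filter with
i.i.d. resampling satisfies, for every bounded measurable `ψ` and every `t`,
`V_t(ψ) ≤ γ_a⁻³ (sup ψ − inf ψ)²` with `γ_a = c_a/C_a`; in particular the asymptotic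
variances stay bounded uniformly in `t`. -/
theorem asymptotic_variance_uniformly_bounded
    {α : Type*} [MeasurableSpace α] (μ : Measure α) [SigmaFinite μ]
    (a0 : α → ℝ) (a : ℕ → α → α → ℝ) (b : ℕ → α → ℝ) (h : ℕ → α → ℝ)
    (ca Ca : ℝ) (hca : 0 < ca) (hcaCa : ca < Ca)
    (ha0_meas : Measurable a0) (ha0_nonneg : ∀ x, 0 ≤ a0 x)
    (ha0_int : Integrable a0 μ) (ha0_one : (∫ x, a0 x ∂μ) = 1)
    (ha_meas : ∀ t, Measurable (Function.uncurry (a t)))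
    (ha_nonneg : ∀ t x' x, 0 ≤ a t x' x)
    (ha_kernel : ∀ t x', ∫ x, a t x' x ∂μ = 1)
    (hh_meas : ∀ t, Measurable (h t)) (hh_nonneg : ∀ t x, 0 ≤ h t x)
    (hh_int : ∀ t, Integrable (h t) μ) (hh_one : ∀ t, ∫ x, h t x ∂μ = 1)
    -- condition (19)
    (h19 : ∀ t x' x, ca * h t x ≤ a t x' x ∧ a t x' x ≤ Ca * h t x)
    -- condition (20)
    (hb_meas : ∀ t, Measurable (b t))
    (hb_nonneg : ∀ t x, 0 ≤ b t x)
    (h20_pos : ∀ t, 0 < ∫ x, b t x * h t x ∂μ)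
    (h20_int : ∀ t, Integrable (fun x => b t x * h t x) μ)
    -- the filter moments m_t, σ_t² and the prediction densities p(y_t | y_{1:t-1})
    (m : ℕ → (α → ℝ) → ℝ)
    (hm : ∀ t ψ, m t ψ = ∫ x, ψ x * trueFilter μ a0 a b t x ∂μ)
    (σ2 : ℕ → (α → ℝ) → ℝ)
    (hσ2 : ∀ t ψ, σ2 t ψ = ∫ x, (ψ x - m t ψ) ^ 2 * trueFilter μ a0 a b t x ∂μ)
    (p : ℕ → ℝ)
    (hp : ∀ t, p (t + 1) = m t (obsOp μ a b (t + 1) fun _ => 1))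
    -- the asymptotic variance, defined recursively
    (V : ℕ → (α → ℝ) → ℝ)
    (hV0 : ∀ ψ, V 0 ψ = σ2 0 ψ)
    (hVsucc : ∀ t ψ, V (t + 1) ψ = σ2 (t + 1) ψ
      + V t (obsOp μ a b (t + 1) fun x => ψ x - m (t + 1) ψ) / p (t + 1) ^ 2) :
    ∀ (ψ : α → ℝ), Measurable ψ →
      BddAbove (Set.range ψ) → BddBelow (Set.range ψ) →
      ∀ t : ℕ, V t ψ ≤ ((ca / Ca)⁻¹) ^ 3 * ((⨆ x, ψ x) - ⨅ x, ψ x) ^ 2 := by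
  intro ψ hψ hψ_above hψ_below t
  have hM : IsMixingModel μ a0 a b h ca Ca := {
    isProbDensity_init := ⟨ha0_nonneg, ha0_int, ha0_one⟩
    isMixingKernel t := ⟨ha_meas _, hh_nonneg _, hca, hcaCa.le, fun x y => (h19 _ x y).1,
      fun x y => (h19 _ x y).2⟩
    isAdmissibleLikelihood t := ⟨(hb_meas _).aestronglyMeasurable, hb_nonneg _,
      by simpa only [mul_comm] using h20_int (t + 1),
      by simpa only [mul_comm] using h20_pos (t + 1)⟩ }
  rw [eq_asymptoticVariance_of_recursion hm hσ2 hp hV0 hVsucc]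
  refine (asymptotic_variance_uniformly_bounded_general hM hψ.aestronglyMeasurable hψ_above
    hψ_below t).trans ?_
  gcongr ?_ * _
  exact pow_le_pow_right₀ ((one_le_inv₀ (hM.isMixingKernel 0).ratio_pos).mpr
    (hM.isMixingKernel 0).ratio_le_one) (by norm_num)
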